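/- Let r, t ∈ ℕ (r, t ≥ 1). For x>0 define F(x) := (−1)^r ∑_{j=0}^{t−2} C(j+r−1, j) ( (−1)^{t−j} / (t−j−1)! ) (1/x^{j+r}) ∑_{m=1}^∞ ψ^{(t−j−1)}(mx+1)/m^{2r+j} + ∑_{i=0}^{r−2} ((−1)^i / x^{t+i}) C(i+t−1, i) ζ(r+t+i) ζ(r−i) − ((−1)^r / x^{r+t−1}) C(r+t−2, t−1) ∑_{m=1}^∞ ( γ + ψ(mx+1) )/m^{2r+t−1}. Then the mixed functional equation F(x) = x^{−t} F(1/x) holds for all x>0. -/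

import Mathlib

open Complex

/-- Binomial coefficient `C(a,b)` for integer arguments, with the conventions
`C(-1,0) = 1`, `C(c,-1) = 0` for `c ≠ -1`, and `C(-1,-1) = 1`. -/
def binomC (a b : ℤ) : ℤ :=
  if a = -1 ∧ (b = 0 ∨ b = -1) then 1
  else if b < 0 ∨ a < 0 then 0
  else (a.toNat.choose b.toNat : ℤ)

/-- The digamma function `ψ(y) = -γ + ∑_{n=0}^∞ (1/(n+1) - 1/(n+y))` (for `y > 0`),
so that `γ + ψ(y+1) = ∑_{n=1}^∞ (1/n - 1/(n+y))`. -/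
noncomputable def psi (y : ℝ) : ℝ :=
  -Real.eulerMascheroniConstant + ∑' n : ℕ, (1 / ((n : ℝ) + 1) - 1 / ((n : ℝ) + y))

/-- The `k`-th polygamma function `ψ^{(k)}(y) = (-1)^{k+1} k! ∑_{n=0}^∞ (n+y)^{-(k+1)}`
(for `k ≥ 1` and `y > 0`), so that `ψ^{(k)}(y+1) = (-1)^{k+1} k! ∑_{n=1}^∞ (n+y)^{-(k+1)}`. -/
noncomputable def polygamma (k : ℕ) (y : ℝ) : ℝ :=
  (-1 : ℝ) ^ (k + 1) * (Nat.factorial k) * ∑' n : ℕ, ((n : ℝ) + y) ^ (-((k : ℤ) + 1))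

/-- The function `𝓕(x)` of the mixed functional equation (Theorem `MIXEDthm`). -/
noncomputable def Fmix (r t : ℕ) (x : ℝ) : ℂ :=
  (-1 : ℂ) ^ r * ∑ j ∈ Finset.range (t - 1),
      ((binomC ((j : ℤ) + r - 1) j : ℤ) : ℂ) *
        ((-1 : ℂ) ^ (t - j) / ((t - j - 1).factorial : ℂ)) * (1 / (x : ℂ) ^ (j + r)) *
        ∑' m : ℕ, ((polygamma (t - j - 1) (((m : ℝ) + 1) * x + 1) : ℝ) : ℂ) /
          ((m + 1 : ℕ) : ℂ) ^ (2 * r + j)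
  + ∑ i ∈ Finset.range (r - 1),
      ((-1 : ℂ) ^ i / (x : ℂ) ^ (t + i)) * ((binomC ((i : ℤ) + t - 1) i : ℤ) : ℂ) *
        riemannZeta ((r : ℂ) + (t : ℂ) + (i : ℂ)) * riemannZeta ((r : ℂ) - (i : ℂ))
  - ((-1 : ℂ) ^ r / (x : ℂ) ^ (r + t - 1)) *
      ((binomC ((r : ℤ) + t - 2) ((t : ℤ) - 1) : ℤ) : ℂ) *
      ∑' m : ℕ, ((Real.eulerMascheroniConstant + psi (((m : ℝ) + 1) * x + 1) : ℝ) : ℂ) /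
        ((m + 1 : ℕ) : ℂ) ^ (2 * r + t - 1)

/-!
`Fmix r t x` is the value of the Mordell–Tornheim double series
`∑_{m, n ≥ 1} 1 / (m ^ r * n ^ r * (n + m x) ^ t)`. Interchanging `m` and `n` and pulling a factor
`x ^ t` out of `(m + n x) ^ t` is precisely the functional equation for this series.

To evaluate it, expand `1 / (n ^ r * (n + m x) ^ t)` into partial fractions in `n`. The poles of
order at least two at `n = 0` give products of zeta values, those at `n = -m x` give polygamma
values, and the two simple poles have opposite residues and combine to a multiple of
`m x / (n * (n + m x)) = 1 / n - 1 / (n + m x)`, whose sum over `n` is `γ + ψ (m x + 1)`.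
-/

section PartialFractions

variable {K : Type*} [Field K]

/-- The principal part at `a = 0` of the rational function `1 / (a ^ r * (a + y) ^ t)` of `a`.
Since `Nat.multichoose t i = (t + i - 1).choose i`, its coefficients are those of the binomial
series of `(a + y) ^ (-t)`. -/
def principalPart (r t : ℕ) (a y : K) : K :=
  ∑ i ∈ Finset.range r, (-1) ^ i * (t.multichoose i : K) / (y ^ (t + i) * a ^ (r - i))

lemma principalPart_zero_left (t : ℕ) (a y : K) : principalPart 0 t a y = 0 :=
  Finset.sum_range_zero _

lemma principalPart_zero_right {r : ℕ} (hr : r ≠ 0) (a y : K) :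
    principalPart r 0 a y = 1 / a ^ r := by
  obtain ⟨r, rfl⟩ := Nat.exists_eq_succ_of_ne_zero hr
  simp [principalPart, Finset.sum_range_succ']

lemma mul_principalPart_succ_succ (r t : ℕ) (a : K) {y : K} (hy : y ≠ 0) :
    y * principalPart (r + 1) (t + 1) a y =
      principalPart (r + 1) t a y - principalPart r (t + 1) a y := by
  have pascal (i : ℕ) : ((t + 1).multichoose (i + 1) : K) =
      t.multichoose (i + 1) + (t + 1).multichoose i := by
    rw [Nat.multichoose_succ_succ, Nat.cast_add]
  simp only [principalPart]
  rw [Finset.sum_range_succ' _ r, Finset.sum_range_succ' _ r, mul_add, Finset.mul_sum,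
    add_sub_right_comm, ← Finset.sum_sub_distrib]
  congr 1
  · refine Finset.sum_congr rfl fun i _ ↦ ?_
    rw [pascal, Nat.add_sub_add_right]
    field_simp
    ring
  · simp only [Nat.multichoose_zero_right, add_zero, pow_succ]
    field_simp

lemma principalPart_neg (t r : ℕ) (b y : K) :
    principalPart t r b (-y) = (-1) ^ r *
      ∑ j ∈ Finset.range t, (r.multichoose j : K) / (y ^ (r + j) * b ^ (t - j)) := by
  rw [principalPart, Finset.mul_sum]
  refine Finset.sum_congr rfl fun j _ ↦ ?_
  rw [neg_pow y, pow_add (-1 : K)]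
  rcases neg_one_pow_eq_or K r with hr | hr <;> rcases neg_one_pow_eq_or K j with hj | hj <;>
    simp [hr, hj, neg_div, div_neg]

theorem one_div_pow_mul_pow_eq_principalPart_add {a y : K} (ha : a ≠ 0) (hy : y ≠ 0)
    (hb : a + y ≠ 0) {r t : ℕ} (hrt : r + t ≠ 0) :
    1 / (a ^ r * (a + y) ^ t) = principalPart r t a y + principalPart t r (a + y) (-y) := by
  induction r generalizing t with
  | zero =>
    rw [principalPart_zero_left, principalPart_zero_right (by simpa using hrt), pow_zero, one_mul,
      zero_add]
  | succ r ihr =>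
    induction t with
    | zero =>
      rw [principalPart_zero_left, principalPart_zero_right hrt, pow_zero, mul_one, add_zero]
    | succ t iht =>
      have split : y * (1 / (a ^ (r + 1) * (a + y) ^ (t + 1))) =
          1 / (a ^ (r + 1) * (a + y) ^ t) - 1 / (a ^ r * (a + y) ^ (t + 1)) := by
        field_simp
        ring
      refine mul_left_cancel₀ hy ?_
      rw [split, iht (by lia), ihr (by lia)]
      linear_combination -mul_principalPart_succ_succ r t a hy +
        mul_principalPart_succ_succ t r (a + y) (neg_ne_zero.mpr hy)

lemma multichoose_sub_one_comm {r t : ℕ} (hr : 1 ≤ r) (ht : 1 ≤ t) :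
    t.multichoose (r - 1) = r.multichoose (t - 1) := by
  rw [Nat.multichoose_eq, Nat.multichoose_eq,
    show r + (t - 1) - 1 = t + (r - 1) - 1 by lia]
  exact Nat.choose_symm_of_eq_add (by lia)

/-- Grouping the two simple poles makes every summand decay at least quadratically in `a`, so that
the identity can be summed term by term. -/
theorem one_div_pow_mul_pow_eq_sum {a y : K} (ha : a ≠ 0) (hy : y ≠ 0) (hb : a + y ≠ 0) {r t : ℕ}
    (hr : 1 ≤ r) (ht : 1 ≤ t) :
    1 / (a ^ r * (a + y) ^ t) =
      ∑ i ∈ Finset.range (r - 1),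
        (-1) ^ i * (t.multichoose i : K) / (y ^ (t + i) * a ^ (r - i)) +
      (-1) ^ r * ∑ j ∈ Finset.range (t - 1),
        (r.multichoose j : K) / (y ^ (r + j) * (a + y) ^ (t - j)) -
      (-1) ^ r * (r.multichoose (t - 1) : K) / (y ^ (r + t - 2) * (a * (a + y))) := by
  have comm := multichoose_sub_one_comm hr ht
  rw [one_div_pow_mul_pow_eq_principalPart_add ha hy hb (by lia), principalPart_neg, principalPart]
  obtain ⟨r, rfl⟩ := Nat.exists_eq_add_of_le' hr
  obtain ⟨t, rfl⟩ := Nat.exists_eq_add_of_le' ht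
  simp only [Nat.add_sub_cancel] at comm ⊢
  rw [Finset.sum_range_succ _ r, Finset.sum_range_succ _ t, comm]
  simp only [Nat.add_sub_cancel_left, show r + 1 + (t + 1) - 2 = r + t by lia]
  field_simp
  ring

end PartialFractions

lemma summable_one_div_succ_pow {k : ℕ} (hk : 2 ≤ k) :
    Summable fun n : ℕ ↦ 1 / ((n : ℝ) + 1) ^ k := by
  exact_mod_cast (summable_nat_add_iff 1).mpr (Real.summable_one_div_nat_pow.mpr hk)

lemma ofReal_tsum_one_div_succ_pow {k : ℕ} (hk : 2 ≤ k) :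
    ((∑' n : ℕ, 1 / ((n : ℝ) + 1) ^ k : ℝ) : ℂ) = riemannZeta k := by
  rw [zeta_eq_tsum_one_div_nat_add_one_cpow (by rw [natCast_re]; exact_mod_cast hk)]
  push_cast
  simp only [cpow_natCast]

lemma polygamma_add_one (k : ℕ) (y : ℝ) :
    polygamma k (y + 1) =
      (-1) ^ (k + 1) * (k.factorial : ℝ) * ∑' n : ℕ, 1 / ((n : ℝ) + 1 + y) ^ (k + 1) := by
  rw [polygamma]
  congr! 3 with n
  rw [zpow_neg, one_div, add_assoc, add_comm y]
  norm_cast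

lemma tsum_one_div_succ_add_pow {k : ℕ} (hk : 1 ≤ k) (y : ℝ) :
    ∑' n : ℕ, 1 / ((n : ℝ) + 1 + y) ^ k =
      (-1) ^ k / ((k - 1).factorial : ℝ) * polygamma (k - 1) (y + 1) := by
  obtain ⟨k, rfl⟩ := Nat.exists_eq_add_of_le' hk
  have sign : ((-1 : ℝ) ^ (k + 1)) * (-1) ^ (k + 1) = 1 := by rw [← mul_pow]; simp
  rw [Nat.add_sub_cancel, polygamma_add_one]
  field_simp
  linear_combination -(∑' n : ℕ, 1 / ((n : ℝ) + 1 + y) ^ (k + 1)) * sign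

lemma tsum_one_div_succ_mul_succ_add {y : ℝ} (hy : 0 < y) :
    ∑' n : ℕ, 1 / (((n : ℝ) + 1) * ((n : ℝ) + 1 + y)) =
      (Real.eulerMascheroniConstant + psi (y + 1)) / y := by
  rw [psi, add_neg_cancel_left, eq_div_iff hy.ne', ← tsum_mul_right]
  refine tsum_congr fun n ↦ ?_
  rw [← add_assoc, add_right_comm (n : ℝ) y]
  field_simp
  ring

/-- The summand of the Mordell–Tornheim double series
`∑_{m, n ≥ 1} 1 / (m ^ q * n ^ r * (n + m x) ^ t)`, with `p = (m - 1, n - 1)`. -/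
noncomputable def tornheimTerm (q r t : ℕ) (x : ℝ) (p : ℕ × ℕ) : ℝ :=
  1 / (((p.1 : ℝ) + 1) ^ q * ((p.2 : ℝ) + 1) ^ r * ((p.2 : ℝ) + 1 + ((p.1 : ℝ) + 1) * x) ^ t)

/-- The Mordell–Tornheim double series `∑_{m, n ≥ 1} 1 / (m ^ q * n ^ r * (n + m x) ^ t)`. Two
distinct exponents `q` and `r` are allowed so that the reduction of the series by partial fractions
stays within the family. -/
noncomputable def tornheimSeries (q r t : ℕ) (x : ℝ) : ℝ :=
  ∑' p, tornheimTerm q r t x p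

lemma tornheimTerm_nonneg (q r t : ℕ) {x : ℝ} (hx : 0 ≤ x) (p : ℕ × ℕ) :
    0 ≤ tornheimTerm q r t x p := by
  unfold tornheimTerm
  positivity

lemma tornheimTerm_eq_zpow_mul_swap (q r t : ℕ) {x : ℝ} (hx : x ≠ 0) (p : ℕ × ℕ) :
    tornheimTerm q r t x p = x ^ (-(t : ℤ)) * tornheimTerm r q t (1 / x) p.swap := by
  have rescale : (p.2 : ℝ) + 1 + ((p.1 : ℝ) + 1) * x =
      x * ((p.1 : ℝ) + 1 + ((p.2 : ℝ) + 1) * (1 / x)) := by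
    field_simp
    ring
  rw [tornheimTerm, tornheimTerm, rescale, mul_pow, zpow_neg, zpow_natCast, Prod.fst_swap,
    Prod.snd_swap]
  ring

theorem tornheimSeries_eq_zpow_mul_swap (q r t : ℕ) {x : ℝ} (hx : x ≠ 0) :
    tornheimSeries q r t x = x ^ (-(t : ℤ)) * tornheimSeries r q t (1 / x) := by
  rw [tornheimSeries, tornheimSeries, ← tsum_mul_left, ← (Equiv.prodComm ℕ ℕ).tsum_eq]
  exact tsum_congr fun p ↦ tornheimTerm_eq_zpow_mul_swap q r t hx p.swap

lemma tornheimTerm_anti {q r t q' r' t' : ℕ} (hq : q' ≤ q) (hr : r' ≤ r) (ht : t' ≤ t) {x : ℝ}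
    (hx : 0 ≤ x) (p : ℕ × ℕ) : tornheimTerm q r t x p ≤ tornheimTerm q' r' t' x p := by
  have hm : (1 : ℝ) ≤ p.1 + 1 := by simp
  have hn : (1 : ℝ) ≤ p.2 + 1 := by simp
  have hs : (1 : ℝ) ≤ p.2 + 1 + (p.1 + 1) * x := le_add_of_le_of_nonneg hn (by positivity)
  unfold tornheimTerm
  gcongr

lemma summable_tornheimTerm_zero_right {s k : ℕ} (hs : 2 ≤ s) (hk : 2 ≤ k) (x : ℝ) :
    Summable (tornheimTerm s k 0 x) :=
  ((summable_one_div_succ_pow hs).mul_of_nonneg (summable_one_div_succ_pow hk)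
    (fun _ ↦ by positivity) fun _ ↦ by positivity).congr fun p ↦ by
      rw [tornheimTerm, pow_zero, mul_one, one_div_mul_one_div]

lemma summable_tornheimTerm_zero_mid {s k : ℕ} (hs : 2 ≤ s) (hk : 2 ≤ k) {x : ℝ} (hx : 0 ≤ x) :
    Summable (tornheimTerm s 0 k x) := by
  refine (summable_tornheimTerm_zero_right hs hk x).of_nonneg_of_le
    (tornheimTerm_nonneg s 0 k hx) fun p ↦ ?_
  have hle : (p.2 : ℝ) + 1 ≤ p.2 + 1 + (p.1 + 1) * x := le_add_of_nonneg_right (by positivity)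
  simp only [tornheimTerm, pow_zero, mul_one]
  gcongr

lemma summable_one_div_succ_mul_sqrt_succ :
    Summable fun n : ℕ ↦ 1 / (((n : ℝ) + 1) * √((n : ℝ) + 1)) := by
  refine ((Real.summable_one_div_nat_add_rpow 1 (3 / 2)).mpr (by norm_num)).congr fun n ↦ ?_
  rw [abs_of_nonneg (by positivity), show (3 / 2 : ℝ) = 1 + 1 / 2 by norm_num,
    Real.rpow_add (by positivity), Real.rpow_one, Real.sqrt_eq_rpow]

/-- By AM-GM, `√m √n √x ≤ n + m x`, so the double series is dominated by a product of two
convergent single series with exponent `3 / 2`. -/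
lemma summable_tornheimTerm {q r t : ℕ} (hq : 1 ≤ q) (hr : 1 ≤ r) (ht : 1 ≤ t) {x : ℝ}
    (hx : 0 < x) : Summable (tornheimTerm q r t x) := by
  have hs := summable_one_div_succ_mul_sqrt_succ
  refine ((hs.mul_of_nonneg hs (fun _ ↦ by positivity) fun _ ↦ by positivity).mul_left
    (1 / √x)).of_nonneg_of_le (tornheimTerm_nonneg q r t hx.le) fun p ↦
    (tornheimTerm_anti hq hr ht hx.le p).trans ?_
  set m : ℝ := p.1 + 1
  set n : ℝ := p.2 + 1
  have hm : 0 < m := by positivity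
  have hn : 0 < n := by positivity
  have am_gm : √n * (√m * √x) ≤ n + m * x := by
    rw [← Real.sqrt_mul hm.le]
    have hmx := Real.sq_sqrt (mul_pos hm hx).le
    have hn' := Real.sq_sqrt hn.le
    have h0 : 0 ≤ √n * √(m * x) := by positivity
    linarith [two_mul_le_add_sq (√n) √(m * x)]
  calc
    tornheimTerm 1 1 1 x p = 1 / (m * n * (n + m * x)) := by simp only [tornheimTerm, pow_one, m, n]
    _ ≤ 1 / (m * n * (√n * (√m * √x))) := by gcongr
    _ = 1 / √x * (1 / (m * √m) * (1 / (n * √n))) := by field_simp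

theorem ofReal_tornheimSeries_zero_right {s k : ℕ} (hs : 2 ≤ s) (hk : 2 ≤ k) (x : ℝ) :
    (tornheimSeries s k 0 x : ℂ) = riemannZeta s * riemannZeta k := by
  rw [← ofReal_tsum_one_div_succ_pow hs, ← ofReal_tsum_one_div_succ_pow hk, ← ofReal_mul,
    tornheimSeries, (summable_tornheimTerm_zero_right hs hk x).tsum_prod]
  simp only [tornheimTerm, pow_zero, mul_one, ← one_div_mul_one_div, tsum_mul_left, tsum_mul_right]

theorem tornheimSeries_zero_mid {s k : ℕ} (hs : 2 ≤ s) (hk : 2 ≤ k) {x : ℝ} (hx : 0 ≤ x) :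
    tornheimSeries s 0 k x = (-1) ^ k / ((k - 1).factorial : ℝ) *
      ∑' m : ℕ, polygamma (k - 1) (((m : ℝ) + 1) * x + 1) / ((m : ℝ) + 1) ^ s := by
  rw [tornheimSeries, (summable_tornheimTerm_zero_mid hs hk hx).tsum_prod, ← tsum_mul_left]
  refine tsum_congr fun m ↦ ?_
  simp only [tornheimTerm, pow_zero, mul_one, ← one_div_mul_one_div]
  rw [tsum_mul_left, tsum_one_div_succ_add_pow (by lia)]
  ring

theorem tornheimSeries_one_one {s : ℕ} (hs : 1 ≤ s) {x : ℝ} (hx : 0 < x) :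
    tornheimSeries s 1 1 x = 1 / x *
      ∑' m : ℕ, (Real.eulerMascheroniConstant + psi (((m : ℝ) + 1) * x + 1)) /
        ((m : ℝ) + 1) ^ (s + 1) := by
  rw [tornheimSeries, (summable_tornheimTerm hs le_rfl le_rfl hx).tsum_prod, ← tsum_mul_left]
  refine tsum_congr fun m ↦ ?_
  simp only [tornheimTerm, pow_one, mul_assoc (_ ^ s)]
  simp only [← one_div_mul_one_div (_ ^ s)]
  rw [tsum_mul_left, tsum_one_div_succ_mul_succ_add (by positivity)]
  field_simp
  ring

lemma tornheimTerm_eq_sum (q : ℕ) {r t : ℕ} (hr : 1 ≤ r) (ht : 1 ≤ t) {x : ℝ} (hx : 0 < x)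
    (p : ℕ × ℕ) :
    tornheimTerm q r t x p =
      ∑ i ∈ Finset.range (r - 1),
        (-1) ^ i * (t.multichoose i : ℝ) / x ^ (t + i) * tornheimTerm (q + t + i) (r - i) 0 x p +
      (-1) ^ r * ∑ j ∈ Finset.range (t - 1),
        (r.multichoose j : ℝ) / x ^ (r + j) * tornheimTerm (q + r + j) 0 (t - j) x p -
      (-1) ^ r * (r.multichoose (t - 1) : ℝ) / x ^ (r + t - 2) *
        tornheimTerm (q + (r + t - 2)) 1 1 x p := by
  have hm : (p.1 : ℝ) + 1 ≠ 0 := by positivity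
  have hn : (p.2 : ℝ) + 1 ≠ 0 := by positivity
  rw [tornheimTerm, mul_assoc, ← one_div_mul_one_div, one_div_pow_mul_pow_eq_sum hn
    (mul_ne_zero hm hx.ne') (by positivity) hr ht, mul_sub, mul_add, mul_left_comm _ ((-1) ^ r),
    Finset.mul_sum, Finset.mul_sum]
  simp only [tornheimTerm, pow_add, mul_pow, pow_zero, pow_one, mul_one]
  congr 1
  · congr 1
    · refine Finset.sum_congr rfl fun i _ ↦ ?_
      field_simp
    · congr 1
      refine Finset.sum_congr rfl fun j _ ↦ ?_
      field_simp
  · field_simp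

theorem tornheimSeries_eq_sum {q r t : ℕ} (hq : 1 ≤ q) (hr : 1 ≤ r) (ht : 1 ≤ t) {x : ℝ}
    (hx : 0 < x) :
    tornheimSeries q r t x =
      ∑ i ∈ Finset.range (r - 1),
        (-1) ^ i * (t.multichoose i : ℝ) / x ^ (t + i) * tornheimSeries (q + t + i) (r - i) 0 x +
      (-1) ^ r * ∑ j ∈ Finset.range (t - 1),
        (r.multichoose j : ℝ) / x ^ (r + j) * tornheimSeries (q + r + j) 0 (t - j) x -
      (-1) ^ r * (r.multichoose (t - 1) : ℝ) / x ^ (r + t - 2) *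
        tornheimSeries (q + (r + t - 2)) 1 1 x := by
  rw [tornheimSeries, tsum_congr (tornheimTerm_eq_sum q hr ht hx)]
  refine HasSum.tsum_eq (.sub (.add (hasSum_sum fun i hi ↦ ?_)
    (.mul_left _ (hasSum_sum fun j hj ↦ ?_))) ?_)
  · have := Finset.mem_range.mp hi
    exact .mul_left _ (summable_tornheimTerm_zero_right (by lia) (by lia) x).hasSum
  · have := Finset.mem_range.mp hj
    exact .mul_left _ (summable_tornheimTerm_zero_mid (by lia) (by lia) hx.le).hasSum
  · exact .mul_left _ (summable_tornheimTerm (by lia) le_rfl le_rfl hx).hasSum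

lemma binomC_natCast (a b : ℕ) : binomC a b = a.choose b := by
  rw [binomC, if_neg (by lia), if_neg (by lia), Int.toNat_natCast, Int.toNat_natCast]

lemma binomC_add_sub_one {n : ℕ} (hn : 1 ≤ n) (k : ℕ) :
    binomC ((k : ℤ) + n - 1) k = n.multichoose k := by
  rw [Nat.multichoose_eq, ← binomC_natCast]
  congr 1
  lia

lemma binomC_add_sub_two {r t : ℕ} (hr : 1 ≤ r) (ht : 1 ≤ t) :
    binomC ((r : ℤ) + t - 2) ((t : ℤ) - 1) = r.multichoose (t - 1) := by
  rw [← binomC_add_sub_one hr]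
  congr 1 <;> lia

theorem Fmix_eq_tornheimSeries {r t : ℕ} (hr : 1 ≤ r) (ht : 1 ≤ t) {x : ℝ} (hx : 0 < x) :
    Fmix r t x = tornheimSeries r r t x := by
  rw [Fmix, tornheimSeries_eq_sum hr hr ht hx, tornheimSeries_one_one (by lia) hx,
    binomC_add_sub_two hr ht, add_comm (∑ i ∈ Finset.range (r - 1), _), ofReal_sub, ofReal_add,
    ofReal_mul, ofReal_sum, ofReal_sum]
  congr 1
  · congr 1
    · push_cast
      congr 1
      refine Finset.sum_congr rfl fun j hj ↦ ?_
      have := Finset.mem_range.mp hj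
      rw [binomC_add_sub_one hr, tornheimSeries_zero_mid (by lia) (by lia) hx.le, two_mul,
        add_comm j r]
      push_cast
      ring
    · refine Finset.sum_congr rfl fun i hi ↦ ?_
      have := Finset.mem_range.mp hi
      rw [binomC_add_sub_one ht, ofReal_mul, ofReal_tornheimSeries_zero_right (by lia) (by lia),
        Nat.cast_sub (by lia)]
      push_cast
      ring
  · rw [show r + (r + t - 2) + 1 = 2 * r + t - 1 by lia,
      show r + t - 1 = (r + t - 2) + 1 by lia]
    push_cast
    ring

theorem statement13 (r t : ℕ) (hr : 1 ≤ r) (ht : 1 ≤ t) (x : ℝ) (hx : 0 < x) :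
    Fmix r t x = ((x : ℂ)) ^ (-(t : ℤ)) * Fmix r t (1 / x) := by
  rw [Fmix_eq_tornheimSeries hr ht hx, Fmix_eq_tornheimSeries hr ht (one_div_pos.mpr hx),
    tornheimSeries_eq_zpow_mul_swap r r t hx.ne', ofReal_mul, ofReal_zpow]
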